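/- arXiv:1911.03948 — 3 statements merged into one kernel-verified Lean document; each statement's English description precedes it below -/
import Mathlib

section
/- For every path-connected topological space X with basepoint x₀, the based 0-spherical complexity equals the Lusternik–Schnirelmann category: SC_0^*(X) = cat(X). -/
/-!
The sphere `S⁰` is the two-point discrete space `{1, -1}`, so a based map `S⁰ → X` is the same as
the point of `X` it assigns to `-1`. Every such map is nullhomotopic because `X` is path-connected;
hence evaluation at `-1` and `pairMap x₀` are mutually inverse continuous maps between `S₀^*X` and
`X`. The ball `B¹` is an interval, and under this identification a sphere filling over `U` is a
continuous choice of paths from `x ∈ U` to `x₀`, which by the exponential law is a contraction of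
`U` in `X` to the point `x₀`. Path-connectedness also lets every nullhomotopic inclusion be
contracted to `x₀` itself. Thus open filling domains correspond to open categorical sets
(`isCatSet_of_fillingDomain`, `isFillingDomain_of_catSet`), and so do the covers by them.
-/

open Metric Set ContinuousMap
open scoped RealInnerProductSpace

noncomputable section

universe u

/-- The unit sphere `Sⁿ` in `ℝ^{n+1}`. -/
abbrev Sph (n : ℕ) : Set (EuclideanSpace ℝ (Fin (n + 1))) := Metric.sphere 0 1

/-- The closed unit ball `B^{n+1}` in `ℝ^{n+1}`. -/
abbrev Ball (n : ℕ) : Set (EuclideanSpace ℝ (Fin (n + 1))) := Metric.closedBall 0 1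

/-- `S_nX`: the space of nullhomotopic continuous maps `Sⁿ → X`, with the compact-open
topology (as a subspace of `C(Sⁿ, X)`). -/
abbrev SphereMaps (n : ℕ) (X : Type*) [TopologicalSpace X] : Type _ :=
  {f : C(↥(Sph n), X) // ∃ x : X, f.Homotopic (ContinuousMap.const _ x)}

/-- `B_{n+1}X`: the space of continuous maps `B^{n+1} → X` with the compact-open topology. -/
abbrev BallMaps (n : ℕ) (X : Type*) [TopologicalSpace X] : Type _ := C(↥(Ball n), X)

/-- The inclusion `Sⁿ ↪ B^{n+1}`. -/
def sphIncl (n : ℕ) : C(↥(Sph n), ↥(Ball n)) :=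
  ⟨fun p => ⟨p.1, sphere_subset_closedBall p.2⟩, (continuous_subtype_val.subtype_mk _)⟩

/-- A sphere filling over `A ⊆ S_nX`: a continuous map `s : A → B_{n+1}X` with
`s(γ)|_{Sⁿ} = γ` for all `γ ∈ A`. -/
def IsSphereFilling {n : ℕ} {X : Type*} [TopologicalSpace X]
    (A : Set (SphereMaps n X)) (s : C(↥A, BallMaps n X)) : Prop :=
  ∀ γ : ↥A, (s γ).comp (sphIncl n) = (γ : SphereMaps n X).1

/-- A subset `A ⊆ S_nX` is a sphere filling domain if a sphere filling over `A` exists. -/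
def IsFillingDomain {n : ℕ} {X : Type*} [TopologicalSpace X] (A : Set (SphereMaps n X)) : Prop :=
  ∃ s : C(↥A, BallMaps n X), IsSphereFilling A s

/-- The basepoint `1_n = (1,0,…,0)` of the sphere `Sⁿ`. -/
def basePt (n : ℕ) : ↥(Sph n) :=
  ⟨EuclideanSpace.single (0 : Fin (n + 1)) (1 : ℝ), by
    rw [mem_sphere_zero_iff_norm, EuclideanSpace.norm_single]; norm_num⟩

/-- `S_n^*X`: the subspace of `S_nX` of maps sending the basepoint `1_n` to `x₀`. -/
def BasedSphereMaps (n : ℕ) (X : Type*) [TopologicalSpace X] (x₀ : X) :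
    Set (SphereMaps n X) :=
  {f | f.1 (basePt n) = x₀}

/-- The based `n`-spherical complexity `SC_n^*(X)`: the minimal number of subsets of
`S_n^*X`, open in `S_n^*X` and admitting sphere fillings, needed to cover `S_n^*X`. -/
def SCbased (n : ℕ) (X : Type*) [TopologicalSpace X] (x₀ : X) : ℕ∞ :=
  sInf {k : ℕ∞ | ∃ m : ℕ, k = m ∧ ∃ U : Fin m → Set (SphereMaps n X),
    (∀ i, U i ⊆ BasedSphereMaps n X x₀ ∧
      IsOpen (Subtype.val ⁻¹' U i : Set ↥(BasedSphereMaps n X x₀)) ∧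
      IsFillingDomain (U i)) ∧
    BasedSphereMaps n X x₀ ⊆ ⋃ i, U i}

/-- The inclusion map of a subset, as a continuous map. -/
def inclC {Y : Type*} [TopologicalSpace Y] (U : Set Y) : C(↥U, Y) :=
  ⟨Subtype.val, continuous_subtype_val⟩

/-- A subset of `Y` whose inclusion into `Y` is nullhomotopic. -/
def IsCatSet {Y : Type*} [TopologicalSpace Y] (U : Set Y) : Prop :=
  ∃ y : Y, (inclC U).Homotopic (ContinuousMap.const _ y)

/-- The Lusternik–Schnirelmann category of `Y`: the minimal number of open subsets with
nullhomotopic inclusion needed to cover `Y` (`⊤` if no finite cover exists). -/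
def LScat (Y : Type*) [TopologicalSpace Y] : ℕ∞ :=
  sInf {k : ℕ∞ | ∃ m : ℕ, k = m ∧ ∃ U : Fin m → Set Y,
    (∀ i, IsOpen (U i) ∧ IsCatSet (U i)) ∧ (⋃ i, U i) = univ}

/-- The point `-1` of `S⁰`. -/
def negPt : ↥(Sph 0) :=
  ⟨EuclideanSpace.single (0 : Fin 1) (-1 : ℝ), by
    rw [mem_sphere_zero_iff_norm, PiLp.norm_single]; norm_num⟩

lemma sph_zero_cases (p : ↥(Sph 0)) : p = basePt 0 ∨ p = negPt := by
  have h : ‖(p : EuclideanSpace ℝ (Fin 1))‖ = 1 := mem_sphere_zero_iff_norm.1 p.2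
  rw [EuclideanSpace.norm_eq, Fin.sum_univ_one, Real.sqrt_sq (norm_nonneg _), Real.norm_eq_abs] at h
  rcases eq_or_eq_neg_of_abs_eq h with h | h
  · left
    ext i
    fin_cases i
    simpa [basePt] using h
  · right
    ext i
    fin_cases i
    simpa [negPt] using h

section PairMap

variable {X : Type*}

/-- The value at `p ∈ S⁰` of the map with `1 ↦ a` and `-1 ↦ b`. -/
def pairFun (a b : X) (p : ↥(Sph 0)) : X :=
  if 0 < (p : EuclideanSpace ℝ (Fin 1)) 0 then a else b

lemma pairFun_basePt (a b : X) : pairFun a b (basePt 0) = a := by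
  simp [pairFun, basePt]

lemma pairFun_negPt (a b : X) : pairFun a b negPt = b := by
  simp [pairFun, negPt]

variable [TopologicalSpace X]

/-- Joint continuity: the sign of the coordinate is locally constant on `S⁰`. -/
lemma continuous_pairFun {Z : Type*} [TopologicalSpace Z] {a b : Z → X} {p : Z → ↥(Sph 0)}
    (ha : Continuous a) (hb : Continuous b) (hp : Continuous p) :
    Continuous fun z => pairFun (a z) (b z) (p z) := by
  have hc : Continuous fun z => (p z : EuclideanSpace ℝ (Fin 1)) 0 := by fun_prop
  have hclopen : IsClopen {z | 0 < (p z : EuclideanSpace ℝ (Fin 1)) 0} := by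
    refine ⟨?_, isOpen_lt continuous_const hc⟩
    -- On `S⁰` a positive coordinate is at least `1`, a closed condition.
    have : {z | 0 < (p z : EuclideanSpace ℝ (Fin 1)) 0} =
        {z | 1 ≤ (p z : EuclideanSpace ℝ (Fin 1)) 0} := by
      ext z
      rcases sph_zero_cases (p z) with h | h <;> simp [h, basePt, negPt]
      norm_num
    rw [this]
    exact isClosed_le continuous_const hc
  unfold pairFun
  refine Continuous.if ?_ ha hb
  intro z hz
  rw [hclopen.frontier_eq] at hz
  exact hz.elim

lemma continuous_pairFun_right (a b : X) : Continuous (pairFun a b) :=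
  continuous_pairFun continuous_const continuous_const continuous_id

variable [PathConnectedSpace X]

/-- The map `S⁰ → X` with `1 ↦ a` and `-1 ↦ b`; a path from `b` to `a` makes it nullhomotopic. -/
def pairMap (a b : X) : SphereMaps 0 X :=
  ⟨⟨pairFun a b, continuous_pairFun_right a b⟩, a, ⟨{
    toFun := fun q => pairFun a (PathConnectedSpace.somePath b a q.1) q.2
    continuous_toFun := continuous_pairFun continuous_const (by fun_prop) continuous_snd
    map_zero_left := fun p => by simp
    map_one_left := fun p => by simp [pairFun] }⟩⟩

lemma pairMap_mem (x₀ x : X) : pairMap x₀ x ∈ BasedSphereMaps 0 X x₀ :=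
  pairFun_basePt x₀ x

lemma continuous_pairMap (x₀ : X) : Continuous (pairMap x₀) := by
  refine Continuous.subtype_mk ?_ _
  refine ContinuousMap.continuous_of_continuous_uncurry _ ?_
  exact continuous_pairFun continuous_const continuous_fst continuous_snd

end PairMap

lemma continuous_eval_negPt {X : Type*} [TopologicalSpace X] :
    Continuous fun f : SphereMaps 0 X => f.1 negPt :=
  (continuous_eval_const negPt).comp continuous_subtype_val

/-- The affine parametrization `t ↦ 2t - 1` of `B¹` by the unit interval. -/
def ballPt : C(unitInterval, ↥(Ball 0)) :=
  ⟨fun t => ⟨EuclideanSpace.single (0 : Fin 1) (2 * (t : ℝ) - 1), by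
      rw [mem_closedBall_zero_iff, PiLp.norm_single, Real.norm_eq_abs, abs_le]
      constructor <;> linarith [t.2.1, t.2.2]⟩, by
    refine Continuous.subtype_mk ?_ _
    refine (PiLp.continuous_toLp 2 _).comp (continuous_pi fun i => ?_)
    fin_cases i
    simp only [Fin.zero_eta, Pi.single_eq_same]
    fun_prop⟩

lemma ballPt_zero : ballPt 0 = sphIncl 0 negPt := by
  ext i
  simp [ballPt, sphIncl, negPt]

lemma ballPt_one : ballPt 1 = sphIncl 0 (basePt 0) := by
  ext i
  simp [ballPt, sphIncl, basePt]
  norm_num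

/-- The inverse parametrization `b ↦ (b + 1) / 2`. -/
def ballParam : C(↥(Ball 0), unitInterval) :=
  ⟨fun b => ⟨((b : EuclideanSpace ℝ (Fin 1)) 0 + 1) / 2, by
      have h : ‖(b : EuclideanSpace ℝ (Fin 1))‖ ≤ 1 := mem_closedBall_zero_iff.1 b.2
      have h' := (PiLp.norm_apply_le (b : EuclideanSpace ℝ (Fin 1)) 0).trans h
      rw [Real.norm_eq_abs, abs_le] at h'
      constructor <;> linarith [h'.1, h'.2]⟩, by
    refine Continuous.subtype_mk ?_ _
    fun_prop⟩

lemma ballParam_negPt : ballParam (sphIncl 0 negPt) = 0 := by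
  ext
  simp [ballParam, sphIncl, negPt]

lemma ballParam_basePt : ballParam (sphIncl 0 (basePt 0)) = 1 := by
  ext
  simp [ballParam, sphIncl, basePt]

section Correspondence

variable {X : Type*} [TopologicalSpace X] [PathConnectedSpace X] {x₀ : X}

/-- Running along the filling of `pairMap x₀ x` from `-1` to `1` contracts the set of the
corresponding points `x` to `x₀`. -/
lemma isCatSet_of_fillingDomain {U : Set (SphereMaps 0 X)} (hU : IsFillingDomain U) :
    IsCatSet (pairMap x₀ ⁻¹' U) := by
  obtain ⟨s, hs⟩ := hU
  have hval (x : ↥(pairMap x₀ ⁻¹' U)) (p : ↥(Sph 0)) :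
      s ⟨pairMap x₀ x, x.2⟩ (sphIncl 0 p) = pairFun x₀ (x : X) p :=
    DFunLike.congr_fun (hs ⟨pairMap x₀ x, x.2⟩) p
  refine ⟨x₀, ⟨{
    toFun := fun q => s ⟨pairMap x₀ q.2, q.2.2⟩ (ballPt q.1)
    continuous_toFun := ?_
    map_zero_left := fun x => ?_
    map_one_left := fun x => ?_ }⟩⟩
  · have h1 : Continuous fun q : unitInterval × ↥(pairMap x₀ ⁻¹' U) =>
        s ⟨pairMap x₀ q.2, q.2.2⟩ :=
      s.continuous.comp (Continuous.subtype_mk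
        ((continuous_pairMap x₀).comp (continuous_subtype_val.comp continuous_snd)) _)
    exact h1.eval (ballPt.continuous.comp continuous_fst)
  · change s _ (ballPt 0) = x.1
    rw [ballPt_zero, hval, pairFun_negPt]
  · change s _ (ballPt 1) = x₀
    rw [ballPt_one, hval, pairFun_basePt]

/-- A contraction of `V` to `x₀` fills a based map `f` by the track of the point `f(-1) ∈ V`. -/
lemma isFillingDomain_of_catSet {V : Set X} (hV : IsCatSet V) :
    IsFillingDomain {f | f ∈ BasedSphereMaps 0 X x₀ ∧ f.1 negPt ∈ V} := by
  obtain ⟨y, hy⟩ := hV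
  -- The endpoint `y` of the contraction can be moved to `x₀` along a path.
  have hconst : (ContinuousMap.const ↥V y).Homotopic (ContinuousMap.const ↥V x₀) :=
    ⟨{ toFun := fun q => PathConnectedSpace.somePath y x₀ q.1
       continuous_toFun := by fun_prop
       map_zero_left := fun x => by simp
       map_one_left := fun x => by simp }⟩
  obtain ⟨H⟩ := hy.trans hconst
  let A : Set (SphereMaps 0 X) := {f | f ∈ BasedSphereMaps 0 X x₀ ∧ f.1 negPt ∈ V}
  let e : C(↥A, ↥V) := ⟨fun f => ⟨f.1.1 negPt, f.2.2⟩,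
    (continuous_eval_negPt.comp continuous_subtype_val).subtype_mk _⟩
  let G : C(↥A × ↥(Ball 0), X) := ⟨fun q => H (ballParam q.2, e q.1), by fun_prop⟩
  refine ⟨G.curry, fun f => ?_⟩
  ext p
  change H (ballParam (sphIncl 0 p), e f) = f.1.1 p
  rcases sph_zero_cases p with rfl | rfl
  · rw [ballParam_basePt, H.apply_one]
    exact f.2.1.symm
  · rw [ballParam_negPt, H.apply_zero]
    rfl

end Correspondence

/-- the based `0`-spherical complexity equals the Lusternik–Schnirelmann
category: `SC_0^*(X) = cat(X)`. -/
theorem SCbased_zero_eq_cat {X : Type*} [TopologicalSpace X] [PathConnectedSpace X] (x₀ : X) :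
    SCbased 0 X x₀ = LScat X := by
  unfold SCbased LScat
  congr 1
  ext k
  refine exists_congr fun m => and_congr_right fun _ => ⟨?_, ?_⟩
  · rintro ⟨U, hU, hcov⟩
    refine ⟨fun i => pairMap x₀ ⁻¹' U i, fun i => ⟨?_, ?_⟩, ?_⟩
    · exact (hU i).2.1.preimage ((continuous_pairMap x₀).subtype_mk (pairMap_mem x₀))
    · exact isCatSet_of_fillingDomain (hU i).2.2
    · refine eq_univ_of_forall fun x => ?_
      obtain ⟨i, hi⟩ := mem_iUnion.1 (hcov (pairMap_mem x₀ x))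
      exact mem_iUnion.2 ⟨i, hi⟩
  · rintro ⟨V, hV, hcov⟩
    refine ⟨fun i => {f | f ∈ BasedSphereMaps 0 X x₀ ∧ f.1 negPt ∈ V i},
      fun i => ⟨fun f hf => hf.1, ?_, isFillingDomain_of_catSet (hV i).2⟩, fun f hf => ?_⟩
    · convert (hV i).1.preimage (continuous_eval_negPt.comp
        (continuous_subtype_val (p := (· ∈ BasedSphereMaps 0 X x₀)))) using 1
      ext f
      exact and_iff_right f.2
    · obtain ⟨i, hi⟩ := mem_iUnion.1 (hcov ▸ mem_univ (f.1 negPt))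
      exact mem_iUnion.2 ⟨i, hf, hi⟩

end
end

section
/- Let X be a path-connected Hausdorff space with basepoint x₀. For all n ∈ ℕ it holds that cat(S_n^*X) ≤ SC_n(X) ≤ cat(S_nX). -/
/-!
Both inequalities hold one open set at a time.

If `A ⊆ S_nX` has a sphere filling `s`, then `h_t(γ)(p) = s(γ)((1 - t) p + t 1_n)` defines a
homotopy on `A ∩ S_n^*X`. It stays in `S_n^*X`, since the basepoint is fixed and every stage
factors through the ball, and it ends at the constant map `x₀`
(`IsFillingDomain.isCatSet_based`). An open cover by filling domains thus restricts to a
categorical open cover of `S_n^*X`.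

Conversely, let the inclusion of `A` into `S_nX` be homotopic to a constant map with value `f`.
As `f` is itself nullhomotopic, the evaluation `A × Sⁿ → X` is homotopic to a constant map. Using
the radius as time parameter gives a map `A × Sⁿ × [0,1] → X` that is constant over radius `0`;
it descends to `A × B^{n+1}`, because polar coordinates are a proper surjection and hence a
quotient map after any product. The adjoint of the descended map is a sphere filling
(`IsCatSet.isFillingDomain`).
-/

open Metric Set ContinuousMap
open scoped RealInnerProductSpace

noncomputable section

universe u

/-- The `n`-spherical complexity `SC_n(X)`: the minimal number of open sphere filling
domains needed to cover `S_nX` (`⊤` if no finite cover exists). -/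
def SC (n : ℕ) (X : Type*) [TopologicalSpace X] : ℕ∞ :=
  sInf {k : ℕ∞ | ∃ m : ℕ, k = m ∧ ∃ U : Fin m → Set (SphereMaps n X),
    (∀ i, IsOpen (U i) ∧ IsFillingDomain (U i)) ∧ (⋃ i, U i) = univ}

/-- The straight-line contraction of the ball towards the basepoint,
`(t, p) ↦ (1 - t) p + t 1_n`, restricted to `p ∈ Sⁿ`. -/
def slide (n : ℕ) : C(unitInterval × ↥(Sph n), ↥(Ball n)) where
  toFun z := ⟨(1 - (z.1 : ℝ)) • (z.2 : EuclideanSpace ℝ (Fin (n + 1))) +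
      (z.1 : ℝ) • (basePt n : EuclideanSpace ℝ (Fin (n + 1))),
    convex_closedBall 0 1 (sphere_subset_closedBall z.2.2)
      (sphere_subset_closedBall (basePt n).2) (by linarith [z.1.2.2]) z.1.2.1 (by ring)⟩
  continuous_toFun := by
    apply Continuous.subtype_mk
    fun_prop

lemma slide_zero (n : ℕ) (p : ↥(Sph n)) : slide n (0, p) = sphIncl n p := by
  apply Subtype.ext; simp [slide, sphIncl]

lemma slide_one (n : ℕ) (p : ↥(Sph n)) : slide n (1, p) = sphIncl n (basePt n) := by
  apply Subtype.ext; simp [slide, sphIncl]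

lemma slide_basePt (n : ℕ) (t : unitInterval) :
    slide n (t, basePt n) = sphIncl n (basePt n) := by
  apply Subtype.ext
  simp [slide, sphIncl, ← add_smul]

/-- A map that factors through the contractible ball is nullhomotopic. -/
lemma exists_homotopic_const_comp {n : ℕ} {X : Type*} [TopologicalSpace X]
    (g : BallMaps n X) (c : C(↥(Sph n), ↥(Ball n))) :
    ∃ x : X, (g.comp c).Homotopic (ContinuousMap.const _ x) := by
  have : ContractibleSpace ↥(Ball n) :=
    (convex_closedBall 0 1).contractibleSpace ⟨0, by simp⟩
  exact ((id_nullhomotopic ↥(Ball n)).comp_right g).comp_left c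

/-- A filling over `A` contracts `A ∩ S_n^*X` within `S_n^*X`: the sphere is slid through the
filling ball towards the basepoint, which stays fixed. -/
lemma IsFillingDomain.isCatSet_based {n : ℕ} {X : Type*} [TopologicalSpace X] {x₀ : X}
    {A : Set (SphereMaps n X)} (hA : IsFillingDomain A) :
    IsCatSet ((↑) ⁻¹' A : Set ↥(BasedSphereMaps n X x₀)) := by
  obtain ⟨s, hs⟩ := hA
  have hs' : ∀ (γ : ↥A) p, s γ (sphIncl n p) = (γ : SphereMaps n X).1 p := fun γ p =>
    DFunLike.congr_fun (hs γ) p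
  have hconst : ∃ x : X, (ContinuousMap.const ↥(Sph n) x₀).Homotopic
      (ContinuousMap.const _ x) := ⟨x₀, .refl _⟩
  refine ⟨⟨⟨ContinuousMap.const _ x₀, hconst⟩, rfl⟩, ⟨⟨⟨fun z =>
    ⟨⟨(s ⟨z.2.1.1, z.2.2⟩).comp ((slide n).curry z.1), exists_homotopic_const_comp _ _⟩, ?_⟩,
      ?_⟩, ?_, ?_⟩⟩⟩
  · change s ⟨z.2.1.1, z.2.2⟩ (slide n (z.1, basePt n)) = x₀
    rw [slide_basePt, hs']
    exact z.2.1.2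
  · apply Continuous.subtype_mk
    apply Continuous.subtype_mk
    have h1 : Continuous fun z : unitInterval × ↥((↑) ⁻¹' A : Set ↥(BasedSphereMaps n X x₀)) =>
        s ⟨z.2.1.1, z.2.2⟩ := by
      apply s.continuous.comp
      apply Continuous.subtype_mk
      fun_prop
    exact h1.compCM ((slide n).curry.continuous.comp continuous_fst)
  · intro γ
    apply Subtype.ext; apply Subtype.ext; ext p
    change s ⟨γ.1.1, γ.2⟩ (slide n (0, p)) = _
    rw [slide_zero, hs']
    rfl
  · intro γ
    apply Subtype.ext; apply Subtype.ext; ext p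
    change s ⟨γ.1.1, γ.2⟩ (slide n (1, p)) = x₀
    rw [slide_one, hs']
    exact γ.1.2

/-- Polar coordinates `Sⁿ × [0,1] → B^{n+1}`, `(p, t) ↦ t p`. -/
def polar (n : ℕ) : C(↥(Sph n) × unitInterval, ↥(Ball n)) where
  toFun z := ⟨(z.2 : ℝ) • (z.1 : EuclideanSpace ℝ (Fin (n + 1))), by
    have h : ‖(z.1 : EuclideanSpace ℝ (Fin (n + 1)))‖ = 1 := mem_sphere_zero_iff_norm.1 z.1.2
    rw [mem_closedBall_zero_iff, norm_smul, h, mul_one, Real.norm_eq_abs, abs_of_nonneg z.2.2.1]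
    exact z.2.2.2⟩
  continuous_toFun := by
    apply Continuous.subtype_mk
    fun_prop

lemma polar_surjective (n : ℕ) : Function.Surjective (polar n) := by
  rintro ⟨q, hq⟩
  have hq1 : ‖q‖ ≤ 1 := mem_closedBall_zero_iff.1 hq
  by_cases h : q = 0
  · exact ⟨(basePt n, 0), Subtype.ext (by simp [polar, h])⟩
  · refine ⟨(⟨‖q‖⁻¹ • q, ?_⟩, ⟨‖q‖, norm_nonneg _, hq1⟩), Subtype.ext ?_⟩
    · rw [mem_sphere_zero_iff_norm, norm_smul, norm_inv, norm_norm,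
        inv_mul_cancel₀ (norm_ne_zero_iff.2 h)]
    · simp [polar, smul_smul, mul_inv_cancel₀ (norm_ne_zero_iff.2 h)]

/-- Polar coordinates are injective away from the centre of the ball. -/
lemma polar_eq_polar {n : ℕ} {a b : ↥(Sph n) × unitInterval} (h : polar n a = polar n b) :
    a = b ∨ (a.2 = 0 ∧ b.2 = 0) := by
  obtain ⟨⟨p, hp⟩, t⟩ := a
  obtain ⟨⟨q, hq⟩, u⟩ := b
  have hv : (t : ℝ) • p = (u : ℝ) • q := congrArg Subtype.val h
  have hp1 : ‖p‖ = 1 := mem_sphere_zero_iff_norm.1 hp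
  have hq1 : ‖q‖ = 1 := mem_sphere_zero_iff_norm.1 hq
  have htu : t = u := by
    have := congrArg norm hv
    rw [norm_smul, norm_smul, hp1, hq1, mul_one, mul_one, Real.norm_eq_abs, Real.norm_eq_abs,
      abs_of_nonneg t.2.1, abs_of_nonneg u.2.1] at this
    exact Subtype.ext this
  subst htu
  by_cases ht : t = 0
  · exact .inr ⟨ht, ht⟩
  · left
    have ht' : (t : ℝ) ≠ 0 := fun h0 => ht (Subtype.ext h0)
    have : p = q := smul_right_injective _ ht' hv
    subst this
    rfl

/-- Being proper, polar coordinates remain a quotient map after taking the product with an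
arbitrary parameter space. -/
lemma isQuotientMap_prod_polar (n : ℕ) (Z : Type*) [TopologicalSpace Z] :
    Topology.IsQuotientMap (Prod.map id (polar n) : Z × _ → Z × ↥(Ball n)) := by
  have hp : IsProperMap (polar n) := (polar n).continuous.isProperMap
  have := (isProperMap_id (X := Z)).prodMap hp
  exact this.isClosedMap.isQuotientMap this.continuous
    (Function.surjective_id.prodMap (polar_surjective n))

/-- The adjoint `A × Sⁿ → X` of the inclusion of a categorical set is homotopic to a constant
map; such a homotopy, read along the radii of the ball, is a sphere filling. -/
lemma IsCatSet.isFillingDomain {n : ℕ} {X : Type*} [TopologicalSpace X]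
    {A : Set (SphereMaps n X)} (hA : IsCatSet A) : IsFillingDomain A := by
  obtain ⟨⟨f, x, hf⟩, ⟨H⟩⟩ := hA
  let ev : C(↥A × ↥(Sph n), X) := ⟨fun z => z.1.1.1 z.2, by fun_prop⟩
  have h1 : ev.Homotopic (f.comp ContinuousMap.snd) :=
    ⟨⟨⟨fun z => (H (z.1, z.2.1)).1 z.2.2, by fun_prop⟩, fun z => by simp [ev]; rfl,
      fun z => by simp⟩⟩
  have h2 : (f.comp ContinuousMap.snd).Homotopic (ContinuousMap.const (↥A × ↥(Sph n)) x) :=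
    hf.comp (.refl ContinuousMap.snd)
  obtain ⟨G⟩ := h1.trans h2
  let g : C(↥A × (↥(Sph n) × unitInterval), X) :=
    ⟨fun z => G (unitInterval.symm z.2.2, (z.1, z.2.1)), by fun_prop⟩
  have hq := isQuotientMap_prod_polar n ↥A
  -- At radius `0` the homotopy is constant, so `g` descends along polar coordinates.
  have hg : Function.FactorsThrough g (Prod.map id (polar n) : ↥A × _ → ↥A × ↥(Ball n)) := by
    rintro ⟨γ, a⟩ ⟨δ, b⟩ h
    obtain ⟨rfl, hab⟩ := Prod.mk.inj h
    rcases polar_eq_polar hab with rfl | ⟨ha, hb⟩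
    · rfl
    · simp [g, ha, hb]
  let L : C(↥A × ↥(Ball n), X) :=
    Topology.IsQuotientMap.lift (f := ⟨_, hq.continuous⟩) hq g hg
  have hL : ∀ z, L (Prod.map id (polar n) z) = g z := fun z =>
    DFunLike.congr_fun (Topology.IsQuotientMap.lift_comp (f := ⟨_, hq.continuous⟩) hq g hg) z
  refine ⟨L.curry, fun γ => ?_⟩
  ext p
  have hp : sphIncl n p = polar n (p, 1) := Subtype.ext (by simp [sphIncl, polar])
  change L (γ, sphIncl n p) = _
  rw [hp]
  refine (hL (γ, (p, 1))).trans ?_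
  simp [g, ev]

/-- for a path-connected Hausdorff space and `n ≥ 1`,
`cat(S_n^*X) ≤ SC_n(X) ≤ cat(S_nX)`. -/
theorem cat_le_SC_le_cat {X : Type*} [TopologicalSpace X] [PathConnectedSpace X] [T2Space X]
    (x₀ : X) (n : ℕ) (hn : 1 ≤ n) :
    LScat ↥(BasedSphereMaps n X x₀) ≤ SC n X ∧ SC n X ≤ LScat (SphereMaps n X) := by
  refine ⟨le_sInf ?_, le_sInf ?_⟩
  · rintro _ ⟨m, rfl, U, hU, hcov⟩
    refine sInf_le ⟨m, rfl, fun i => (↑) ⁻¹' U i, fun i =>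
      ⟨(hU i).1.preimage continuous_subtype_val, (hU i).2.isCatSet_based⟩, ?_⟩
    rw [← preimage_iUnion, hcov, preimage_univ]
  · rintro _ ⟨m, rfl, U, hU, hcov⟩
    exact sInf_le ⟨m, rfl, U, fun i => ⟨(hU i).1, (hU i).2.isFillingDomain⟩, hcov⟩

end
end

section
/- Let X be a path-connected metrizable ANR and n ∈ ℕ₀. Then SC_{n,X}(A) = SC^cl_{n,X}(A) for every closed subset A ⊆ S_nX. -/
/-!
Both inequalities come from replacing the members of a cover one by one.

Since `X` is metrizable and `Sⁿ` is compact, `S_nX` is metrizable, hence normal, so an open cover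
of the closed set `A` shrinks to a closed one; fillings restrict to subsets, which gives
`SC^cl ≤ SC`.

For `SC ≤ SC^cl`, every closed filling domain `F` has an open neighborhood which is a filling
domain (`IsFillingDomain.exists_isOpen_superset`): a filling `s` over `F` and the evaluation on
`Sⁿ` glue to a continuous map on the closed subset `F × B^{n+1} ∪ S_nX × Sⁿ` of the metrizable
space `S_nX × B^{n+1}`. As `X` is an ANR, this map extends to an open set `W`; since `B^{n+1}` is
compact, the set of `γ` with `{γ} × B^{n+1} ⊆ W` is open, and currying the extension gives a
filling over it.
-/

open Metric Set ContinuousMap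
open scoped RealInnerProductSpace

noncomputable section

universe u

/-- The subspace spherical complexity `SC_{n,X}(A)`: the minimal number of sphere filling
domains, open in `S_nX`, needed to cover `A` (`⊤` if no finite cover exists;
the empty set gets the value `0`). -/
def SCsub (n : ℕ) (X : Type*) [TopologicalSpace X] (A : Set (SphereMaps n X)) : ℕ∞ :=
  sInf {k : ℕ∞ | ∃ m : ℕ, k = m ∧ ∃ U : Fin m → Set (SphereMaps n X),
    (∀ i, IsOpen (U i) ∧ IsFillingDomain (U i)) ∧ A ⊆ ⋃ i, U i}

/-- `SC^cl_{n,X}(A)`: the minimal number of sphere filling domains, closed in `S_nX`,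
needed to cover `A` (`⊤` if no finite cover exists). -/
def SCcl (n : ℕ) (X : Type*) [TopologicalSpace X] (A : Set (SphereMaps n X)) : ℕ∞ :=
  sInf {k : ℕ∞ | ∃ m : ℕ, k = m ∧ ∃ U : Fin m → Set (SphereMaps n X),
    (∀ i, IsClosed (U i) ∧ IsFillingDomain (U i)) ∧ A ⊆ ⋃ i, U i}

/-- A metrizable space `Y` is an absolute neighborhood retract (ANR) if for every metrizable
space `Z`, every closed subspace `C ⊆ Z` and every continuous `f : C → Y`, the map `f` admits
a continuous extension to an open neighborhood of `C` in `Z`. -/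
def IsANR (Y : Type u) [TopologicalSpace Y] : Prop :=
  ∀ (Z : Type u) [TopologicalSpace Z] [TopologicalSpace.MetrizableSpace Z] (C : Set Z),
    IsClosed C → ∀ f : C(↥C, Y),
      ∃ (U : Set Z) (_ : IsOpen U) (hCU : C ⊆ U) (g : C(↥U, Y)),
        ∀ (z : Z) (hz : z ∈ C), g ⟨z, hCU hz⟩ = f ⟨z, hz⟩

instance metrizableSpace_sphereMaps (n : ℕ) (X : Type*) [TopologicalSpace X]
    [TopologicalSpace.MetrizableSpace X] : TopologicalSpace.MetrizableSpace (SphereMaps n X) := by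
  let := TopologicalSpace.metrizableSpaceMetric X
  infer_instance

theorem IsFillingDomain.mono {n : ℕ} {X : Type*} [TopologicalSpace X]
    {A B : Set (SphereMaps n X)} (hB : IsFillingDomain B) (hAB : A ⊆ B) : IsFillingDomain A := by
  obtain ⟨s, hs⟩ := hB
  exact ⟨s.comp ⟨Set.inclusion hAB, continuous_inclusion hAB⟩, fun γ => hs (Set.inclusion hAB γ)⟩

open Classical in
/-- The map on `F × B^{n+1} ∪ S_nX × Sⁿ` given by `s` on the first piece and by evaluation on the
second one, extended by a constant to a (possibly discontinuous) total function on `S_nX × B^{n+1}`. -/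
def glueFun {n : ℕ} {X : Type*} [TopologicalSpace X] [Nonempty X]
    (F : Set (SphereMaps n X)) (s : C(↥F, BallMaps n X)) (p : SphereMaps n X × ↥(Ball n)) : X :=
  if h : p.1 ∈ F then s ⟨p.1, h⟩ p.2
  else if h' : (p.2 : EuclideanSpace ℝ (Fin (n + 1))) ∈ Sph n then p.1.1 ⟨p.2, h'⟩
  else Classical.arbitrary X

theorem glueFun_of_mem {n : ℕ} {X : Type*} [TopologicalSpace X] [Nonempty X]
    {F : Set (SphereMaps n X)} (s : C(↥F, BallMaps n X)) (p : SphereMaps n X × ↥(Ball n))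
    (h : p.1 ∈ F) : glueFun F s p = s ⟨p.1, h⟩ p.2 := by
  simp [glueFun, h]

/-- On `S_nX × Sⁿ` the two pieces agree because `s` is a filling. -/
theorem glueFun_of_mem_sphere {n : ℕ} {X : Type*} [TopologicalSpace X] [Nonempty X]
    {F : Set (SphereMaps n X)} {s : C(↥F, BallMaps n X)} (hs : IsSphereFilling F s)
    (p : SphereMaps n X × ↥(Ball n)) (h : (p.2 : EuclideanSpace ℝ (Fin (n + 1))) ∈ Sph n) :
    glueFun F s p = p.1.1 ⟨p.2, h⟩ := by
  by_cases hF : p.1 ∈ F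
  · rw [glueFun_of_mem s p hF]
    exact DFunLike.congr_fun (hs ⟨p.1, hF⟩) ⟨p.2, h⟩
  · rw [glueFun, dif_neg hF, dif_pos h]

theorem continuousOn_glueFun {n : ℕ} {X : Type*} [TopologicalSpace X] [Nonempty X]
    {F : Set (SphereMaps n X)} (hF : IsClosed F) {s : C(↥F, BallMaps n X)}
    (hs : IsSphereFilling F s) :
    ContinuousOn (glueFun F s) ({p | p.1 ∈ F} ∪
      {p | (p.2 : EuclideanSpace ℝ (Fin (n + 1))) ∈ Sph n}) := by
  refine ContinuousOn.union_of_isClosed ?_ ?_ (hF.preimage continuous_fst)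
    (Metric.isClosed_sphere.preimage (continuous_subtype_val.comp continuous_snd))
  · rw [continuousOn_iff_continuous_domRestrict]
    have h : Continuous fun p : {p : SphereMaps n X × ↥(Ball n) | p.1 ∈ F} =>
        s ⟨p.1.1, p.2⟩ p.1.2 :=
      (s.continuous.comp ((continuous_fst.comp continuous_subtype_val).subtype_mk _)).eval
        (continuous_snd.comp continuous_subtype_val)
    exact h.congr fun p => (glueFun_of_mem s p.1 p.2).symm
  · rw [continuousOn_iff_continuous_domRestrict]
    have h : Continuous fun p : {p : SphereMaps n X × ↥(Ball n) |
        (p.2 : EuclideanSpace ℝ (Fin (n + 1))) ∈ Sph n} =>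
        p.1.1.1 (⟨p.1.2, p.2⟩ : ↥(Sph n)) :=
      (continuous_subtype_val.comp (continuous_fst.comp continuous_subtype_val)).eval
        ((continuous_subtype_val.comp
          (continuous_snd.comp continuous_subtype_val)).subtype_mk _)
    exact h.congr fun p => (glueFun_of_mem_sphere hs p.1 p.2).symm

theorem IsFillingDomain.exists_isOpen_superset {n : ℕ} {X : Type u} [TopologicalSpace X]
    [Nonempty X] [TopologicalSpace.MetrizableSpace X] (hX : IsANR X)
    {F : Set (SphereMaps n X)} (hF : IsClosed F) (hd : IsFillingDomain F) :
    ∃ U : Set (SphereMaps n X), IsOpen U ∧ F ⊆ U ∧ IsFillingDomain U := by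
  obtain ⟨s, hs⟩ := hd
  have hC : IsClosed ({p : SphereMaps n X × ↥(Ball n) | p.1 ∈ F} ∪
      {p | (p.2 : EuclideanSpace ℝ (Fin (n + 1))) ∈ Sph n}) :=
    (hF.preimage continuous_fst).union
      (Metric.isClosed_sphere.preimage (continuous_subtype_val.comp continuous_snd))
  obtain ⟨W, hW, hCW, g, hg⟩ := hX (SphereMaps n X × ↥(Ball n)) _ hC
    ⟨_, (continuousOn_glueFun hF hs).domRestrict⟩
  -- The projection along the compact ball is closed, so the `γ` whose fibre lies in `W` form an
  -- open set.
  have hU : IsOpen {γ : SphereMaps n X | ∀ x : ↥(Ball n), (γ, x) ∈ W} := by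
    have h := isClosedMap_fst_of_compactSpace (X := SphereMaps n X) (Y := ↥(Ball n)) _
      hW.isClosed_compl
    rw [← isOpen_compl_iff] at h
    convert h using 1
    ext γ
    simp
  refine ⟨_, hU, fun γ hγ x => hCW (Or.inl hγ), ?_⟩
  let G : C(↥{γ : SphereMaps n X | ∀ x : ↥(Ball n), (γ, x) ∈ W} × ↥(Ball n), X) :=
    g.comp ⟨fun p => ⟨(p.1.1, p.2), p.1.2 p.2⟩,
      ((continuous_subtype_val.comp continuous_fst).prodMk continuous_snd).subtype_mk _⟩
  refine ⟨G.curry, fun γ => ?_⟩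
  ext x
  have hx : (γ.1, sphIncl n x) ∈ {p : SphereMaps n X × ↥(Ball n) | p.1 ∈ F} ∪
      {p | (p.2 : EuclideanSpace ℝ (Fin (n + 1))) ∈ Sph n} := Or.inr x.2
  have h₁ := hg (γ.1, sphIncl n x) hx
  have h₂ := glueFun_of_mem_sphere hs (γ.1, sphIncl n x) x.2
  simp only [ContinuousMap.coe_mk, Set.domRestrict_apply] at h₁
  rw [h₂] at h₁
  exact h₁

/-- in a path-connected metrizable ANR, `SC_{n,X}(A) = SC^cl_{n,X}(A)` for
every closed `A ⊆ S_nX`. -/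
theorem SCsub_eq_SCcl {X : Type u} [TopologicalSpace X] [PathConnectedSpace X]
    [TopologicalSpace.MetrizableSpace X] (hX : IsANR X) (n : ℕ)
    (A : Set (SphereMaps n X)) (hA : IsClosed A) :
    SCsub n X A = SCcl n X A := by
  apply le_antisymm
  · refine sInf_le_sInf ?_
    rintro k ⟨m, rfl, F, hF, hAF⟩
    choose U hUo hFU hUd using fun i => (hF i).2.exists_isOpen_superset hX (hF i).1
    exact ⟨m, rfl, U, fun i => ⟨hUo i, hUd i⟩, hAF.trans (iUnion_mono hFU)⟩
  · refine sInf_le_sInf ?_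
    rintro k ⟨m, rfl, U, hU, hAU⟩
    obtain ⟨F, hAF, hFc, hFU⟩ := exists_subset_iUnion_closed_subset hA (fun i => (hU i).1)
      (fun _ _ => Set.toFinite _) hAU
    exact ⟨m, rfl, F, fun i => ⟨hFc i, (hU i).2.mono (hFU i)⟩, hAF⟩

end
end
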